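/- Let T be a nonempty finite set with uniform probability measure π(A) = |A|/|T|, and let B′, B″, S ⊆ T be subsets such that B′ ⫫ S, B″ ⫫ S, and B′ ⫫ B″. Set u = 1_{B′} − π(B′)·1 and v = 1_{B″} − π(B″)·1, where 1_C denotes the indicator function of C. Then ∑_{s ∈ S} u(s)·v(s) = |T|·[π(B′ ∩ B″ ∩ S) − π(B′ ∩ B″)·π(S)] = |B′ ∩ B″ ∩ S| − |B′ ∩ B″|·|S|/|T|. In particular, this sum is nonzero if and only if S is not independent of B′ ∩ B″. -/

import Mathlib

/-!
Independence of `B` and `S` says that the mean of `1_B` over `S` equals its mean `π(B)` over `T`.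
So `1_B - π(B)` sums to zero over `S`, and, as for the covariance of two random variables, centering
both factors of `1_B · 1_C` lowers the sum over `S` by `|S| · π(B) · π(C)`. When `B` and `C` are
independent, this is `|S| · π(B ∩ C)`.
-/

/-- Independence of two subsets of a finite set `T`:  `|A ∩ B| · |T| = |A| · |B|`. -/
def indep {T : Type} [Fintype T] [DecidableEq T] (B C : Finset T) : Prop :=
  (B ∩ C).card * Fintype.card T = B.card * C.card

open Finset

theorem sum_sub_mul_sub_of_sum_eq_card_mul {ι R : Type*} [CommRing R] {S : Finset ι} {f g : ι → R}
    {a b : R} (hf : ∑ i ∈ S, f i = #S * a) (hg : ∑ i ∈ S, g i = #S * b) :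
    ∑ i ∈ S, (f i - a) * (g i - b) = ∑ i ∈ S, f i * g i - #S * (a * b) := by
  have hf_centered : ∑ i ∈ S, (f i - a) = 0 := by
    rw [sum_sub_distrib, hf, sum_const, nsmul_eq_mul, sub_self]
  calc ∑ i ∈ S, (f i - a) * (g i - b)
      = ∑ i ∈ S, (f i - a) * g i - (∑ i ∈ S, (f i - a)) * b := by
        rw [sum_mul, ← sum_sub_distrib]
        simp only [mul_sub]
    _ = ∑ i ∈ S, (f i - a) * g i := by rw [hf_centered, zero_mul, sub_zero]
    _ = ∑ i ∈ S, f i * g i - a * ∑ i ∈ S, g i := by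
        simp only [sub_mul, sum_sub_distrib, mul_sum]
    _ = ∑ i ∈ S, f i * g i - #S * (a * b) := by rw [hg, mul_left_comm]

theorem sum_ite_mem_one_zero_eq_card_inter {ι R : Type*} [DecidableEq ι] [NonAssocSemiring R]
    (B S : Finset ι) : ∑ i ∈ S, (if i ∈ B then (1 : R) else 0) = #(B ∩ S) := by
  rw [sum_boole, filter_mem_eq_inter, inter_comm]

section Independence

variable {T : Type} [Fintype T] [DecidableEq T]

theorem indep_iff_card_inter_eq_div [Nonempty T] (K : Type*) [DivisionSemiring K] [CharZero K]
    {B C : Finset T} :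
    indep B C ↔ (#(B ∩ C) : K) = #B * #C / Fintype.card T := by
  rw [indep, eq_div_iff (Nat.cast_ne_zero.mpr Fintype.card_ne_zero)]
  norm_cast

theorem indep.sum_ite_mem_eq_card_mul [Nonempty T] (K : Type*) [DivisionSemiring K] [CharZero K]
    {B S : Finset T} (h : indep B S) :
    ∑ s ∈ S, (if s ∈ B then (1 : K) else 0) = #S * (#B / Fintype.card T) := by
  rw [sum_ite_mem_one_zero_eq_card_inter, (indep_iff_card_inter_eq_div K).mp h, mul_div_assoc',
    Nat.cast_comm]

/-- The centered indicator `1_B - π(B)·1` of `B`, where `π` is the uniform probability on `T`;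
it takes values in an arbitrary division ring. -/
def centeredIndicator (K : Type*) [DivisionRing K] (B : Finset T) : T → K :=
  fun x => (if x ∈ B then 1 else 0) - #B / Fintype.card T

variable [Nonempty T] (K : Type*) [Field K] [CharZero K] {B C S : Finset T}

theorem sum_centeredIndicator_mul_centeredIndicator (hB : indep B S) (hC : indep C S) :
    ∑ s ∈ S, centeredIndicator K B s * centeredIndicator K C s =
      #(B ∩ C ∩ S) - #S * ((#B / Fintype.card T) * (#C / Fintype.card T)) := by
  simp only [centeredIndicator]
  rw [sum_sub_mul_sub_of_sum_eq_card_mul (hB.sum_ite_mem_eq_card_mul K)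
    (hC.sum_ite_mem_eq_card_mul K)]
  simp only [ite_zero_mul_ite_zero, mul_one, ← mem_inter, sum_ite_mem_one_zero_eq_card_inter]

theorem indicator_contrast_inner_general (hB : indep B S) (hC : indep C S) (hBC : indep B C) :
    (∑ s ∈ S, centeredIndicator K B s * centeredIndicator K C s =
        (Fintype.card T : K) *
          (#(B ∩ C ∩ S) / Fintype.card T -
            #(B ∩ C) / Fintype.card T * (#S / Fintype.card T))) ∧
    (∑ s ∈ S, centeredIndicator K B s * centeredIndicator K C s =
        #(B ∩ C ∩ S) - #(B ∩ C) * #S / Fintype.card T) ∧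
    (∑ s ∈ S, centeredIndicator K B s * centeredIndicator K C s ≠ 0 ↔ ¬ indep (B ∩ C) S) := by
  have sum_eq : ∑ s ∈ S, centeredIndicator K B s * centeredIndicator K C s =
      #(B ∩ C ∩ S) - #(B ∩ C) * #S / Fintype.card T := by
    rw [sum_centeredIndicator_mul_centeredIndicator K hB hC,
      (indep_iff_card_inter_eq_div K).mp hBC]
    ring
  refine ⟨?_, sum_eq, ?_⟩
  · rw [sum_eq]
    field_simp
  · rw [sum_eq, sub_ne_zero, ne_eq, ← indep_iff_card_inter_eq_div K]

end Independence

/-- Let `B′, B″, S` be subsets of a nonempty finite set `T` with `B′ ⫫ S`, `B″ ⫫ S` and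
`B′ ⫫ B″`, and let `u = 1_{B′} − π(B′)·1`, `v = 1_{B″} − π(B″)·1`, where `π(A) = |A|/|T|`.
Then `∑_{s ∈ S} u(s)·v(s) = |T|·[π(B′ ∩ B″ ∩ S) − π(B′ ∩ B″)·π(S)]
= |B′ ∩ B″ ∩ S| − |B′ ∩ B″|·|S|/|T|`, and this sum is nonzero if and only if `S` is not
independent of `B′ ∩ B″`. -/
theorem indicator_contrast_inner {T : Type} [Fintype T] [DecidableEq T] [Nonempty T]
    (B' B'' S : Finset T) (h1 : indep B' S) (h2 : indep B'' S) (h3 : indep B' B'')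
    (u v : T → ℝ)
    (hu : u = fun x => (if x ∈ B' then (1 : ℝ) else 0) - (B'.card : ℝ) / Fintype.card T)
    (hv : v = fun x => (if x ∈ B'' then (1 : ℝ) else 0) - (B''.card : ℝ) / Fintype.card T) :
    (∑ s ∈ S, u s * v s =
        (Fintype.card T : ℝ) *
          (((B' ∩ B'' ∩ S).card : ℝ) / Fintype.card T -
            ((B' ∩ B'').card : ℝ) / Fintype.card T * ((S.card : ℝ) / Fintype.card T))) ∧
    (∑ s ∈ S, u s * v s =
        ((B' ∩ B'' ∩ S).card : ℝ) - ((B' ∩ B'').card : ℝ) * S.card / Fintype.card T) ∧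
    (∑ s ∈ S, u s * v s ≠ 0 ↔ ¬ indep (B' ∩ B'') S) := by
  subst hu hv
  exact indicator_contrast_inner_general ℝ h1 h2 h3
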